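/- Let (Ω, P) be a probability space, A ∈ ℝ^{n×n} symmetric with 0 ⪯ A ⪯ I, W_0, …, W_{N−1} ∈ ℝ^{P×P} orthogonal, and X : Ω → ℝ^{n×P} an integrable random matrix with all Ū_m integrable, where Ū_0 = X and Ū_{m+1} = |(Ū_m − E[Ū_m])W_m|. Define also the realization-wise IGT recursion U_0 = X, U_{m+1} = |(I − A)U_m W_m|. Then almost surely, (Σ_{m=0}^N ‖A U_m − E[Ū_m]‖²)^{1/2} ≤ √2 · Σ_{m=0}^N ‖A Ū_m − E[Ū_m]‖. -/

import Mathlib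

/-!
The inequality holds for every `ω`. Write `E_m = E[Ū_m]`, `D_m = U_m - Ū_m` and
`R_m = A Ū_m - E_m`. Then `A U_m - E_m = A D_m + R_m`, and since the entrywise absolute value is
nonexpansive and right multiplication by an orthogonal matrix is an isometry,
`‖D_{m+1}‖ ≤ ‖(I - A) U_m - (Ū_m - E_m)‖ = ‖(I - A) D_m - R_m‖`.

The key estimate (`frobSq_split_le`) is
`‖A D + R‖² + ‖(I - A) D - R‖² ≤ (‖D‖ + √2 ‖R‖)²`. Expanding the left side gives
`‖A D‖² + ‖(I - A) D‖² + 2 ⟨A D - (I - A) D, R⟩ + 2 ‖R‖²`, and `⟨A D, (I - A) D⟩ ≥ 0` bounds both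
`‖A D‖² + ‖(I - A) D‖²` and `‖A D - (I - A) D‖²` by `‖D‖²`.

As `D_0 = 0`, induction on `k` yields
`∑_{m<k} ‖A U_m - E_m‖² + ‖D_k‖² ≤ 2 (∑_{m<k} ‖R_m‖)²` for `k ≤ N`, and one more use of the key
estimate, without `W_N`, adds the term `m = N`.
-/

open Matrix MeasureTheory

/-- Squared Frobenius norm of a real matrix: `‖X‖² = Tr(XᵀX) = ∑ i j, X i j ^ 2`. -/
def frobSq {n P : ℕ} (X : Matrix (Fin n) (Fin P) ℝ) : ℝ := ∑ i, ∑ j, (X i j) ^ 2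

/-- Frobenius norm of a real matrix. -/
noncomputable def frob {n P : ℕ} (X : Matrix (Fin n) (Fin P) ℝ) : ℝ := Real.sqrt (frobSq X)

/-- The (realization-wise) IGT recursion: `U 0 = X`,
`U (m+1) = |(I - A) * U m * W m|` (entrywise absolute value). -/
def igtSeq {n P : ℕ} (A : Matrix (Fin n) (Fin n) ℝ)
    (W : ℕ → Matrix (Fin P) (Fin P) ℝ) (X : Matrix (Fin n) (Fin P) ℝ) :
    ℕ → Matrix (Fin n) (Fin P) ℝ
  | 0 => X
  | m + 1 => ((1 - A) * igtSeq A W X m * W m).map (|·|)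

/-- Entrywise expectation of a random matrix. -/
noncomputable def matExp {Ω : Type*} [MeasurableSpace Ω] (μ : Measure Ω) {n P : ℕ}
    (X : Ω → Matrix (Fin n) (Fin P) ℝ) : Matrix (Fin n) (Fin P) ℝ :=
  Matrix.of fun i j => ∫ ω, X ω i j ∂μ

/-- The E-IGT recursion: `Ū 0 = X`, `Ū (m+1) = |(Ū m − E[Ū m]) * W m|`. -/
noncomputable def eigtSeq {Ω : Type*} [MeasurableSpace Ω] (μ : Measure Ω) {n P : ℕ}
    (W : ℕ → Matrix (Fin P) (Fin P) ℝ) (X : Ω → Matrix (Fin n) (Fin P) ℝ) :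
    ℕ → Ω → Matrix (Fin n) (Fin P) ℝ
  | 0 => X
  | m + 1 => fun ω =>
      ((eigtSeq μ W X m ω - matExp μ (eigtSeq μ W X m)) * W m).map (|·|)

/-- The Frobenius inner product `Tr(XᵀY)`, written entrywise. -/
def frobInner {n P : ℕ} (X Y : Matrix (Fin n) (Fin P) ℝ) : ℝ := ∑ i, ∑ j, X i j * Y i j

lemma frobSq_nonneg {n P : ℕ} (X : Matrix (Fin n) (Fin P) ℝ) : 0 ≤ frobSq X :=
  Finset.sum_nonneg fun _ _ => Finset.sum_nonneg fun _ _ => sq_nonneg _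

lemma frob_nonneg {n P : ℕ} (X : Matrix (Fin n) (Fin P) ℝ) : 0 ≤ frob X := Real.sqrt_nonneg _

lemma frob_sq {n P : ℕ} (X : Matrix (Fin n) (Fin P) ℝ) : frob X ^ 2 = frobSq X :=
  Real.sq_sqrt (frobSq_nonneg X)

lemma frobInner_eq_trace {n P : ℕ} (X Y : Matrix (Fin n) (Fin P) ℝ) :
    frobInner X Y = (Xᵀ * Y).trace := by
  simp only [frobInner, Matrix.trace, Matrix.diag, Matrix.mul_apply, Matrix.transpose_apply]
  exact Finset.sum_comm

lemma frobSq_eq_trace {n P : ℕ} (X : Matrix (Fin n) (Fin P) ℝ) :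
    frobSq X = (Xᵀ * X).trace := by
  rw [← frobInner_eq_trace]
  simp only [frobSq, frobInner, sq]

lemma frobSq_add {n P : ℕ} (X Y : Matrix (Fin n) (Fin P) ℝ) :
    frobSq (X + Y) = frobSq X + 2 * frobInner X Y + frobSq Y := by
  simp only [frobSq, frobInner, Finset.mul_sum, ← Finset.sum_add_distrib, Matrix.add_apply]
  refine Finset.sum_congr rfl fun i _ => Finset.sum_congr rfl fun j _ => ?_
  ring

lemma frobSq_sub {n P : ℕ} (X Y : Matrix (Fin n) (Fin P) ℝ) :
    frobSq (X - Y) = frobSq X - 2 * frobInner X Y + frobSq Y := by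
  simp only [frobSq, frobInner, Finset.mul_sum, ← Finset.sum_add_distrib,
    ← Finset.sum_sub_distrib, Matrix.sub_apply]
  refine Finset.sum_congr rfl fun i _ => Finset.sum_congr rfl fun j _ => ?_
  ring

lemma frobInner_sub_left {n P : ℕ} (X Y Z : Matrix (Fin n) (Fin P) ℝ) :
    frobInner (X - Y) Z = frobInner X Z - frobInner Y Z := by
  simp only [frobInner, ← Finset.sum_sub_distrib, Matrix.sub_apply, sub_mul]

lemma frobInner_le {n P : ℕ} (X Y : Matrix (Fin n) (Fin P) ℝ) :
    frobInner X Y ≤ frob X * frob Y := by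
  have h := Real.sum_mul_le_sqrt_mul_sqrt Finset.univ
    (fun p : Fin n × Fin P => X p.1 p.2) (fun p => Y p.1 p.2)
  simpa only [frobInner, frob, frobSq, Fintype.sum_prod_type] using h

/-- `⟨A D, (I - A) D⟩ ≥ 0`, because `A (I - A) = A (I - A) A + (I - A) A (I - A)` writes the
quadratic form as a sum of two forms of positive semidefinite matrices. -/
lemma frobInner_mul_one_sub_nonneg {n P : ℕ} {A : Matrix (Fin n) (Fin n) ℝ}
    (hA_symm : A.IsSymm) (hA : A.PosSemidef) (hIA : (1 - A).PosSemidef)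
    (D : Matrix (Fin n) (Fin P) ℝ) : 0 ≤ frobInner (A * D) ((1 - A) * D) := by
  have h1 := (hIA.conjTranspose_mul_mul_same (A * D)).trace_nonneg
  have h2 := (hA.conjTranspose_mul_mul_same ((1 - A) * D)).trace_nonneg
  have hT : Aᵀ = A := hA_symm
  have key : (A * D)ᵀ * ((1 - A) * D) =
      (A * D)ᵀ * (1 - A) * (A * D) + ((1 - A) * D)ᵀ * A * ((1 - A) * D) := by
    have hM : A * (1 - A) = A * (1 - A) * A + (1 - A) * A * (1 - A) := by noncomm_ring
    simp only [Matrix.transpose_mul, Matrix.transpose_sub, Matrix.transpose_one, hT]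
    calc Dᵀ * A * ((1 - A) * D) = Dᵀ * (A * (1 - A)) * D := by simp only [Matrix.mul_assoc]
      _ = Dᵀ * (A * (1 - A) * A + (1 - A) * A * (1 - A)) * D := by rw [← hM]
      _ = _ := by simp only [Matrix.mul_add, Matrix.add_mul, Matrix.mul_assoc]
  rw [Matrix.conjTranspose_eq_transpose_of_trivial] at h1 h2
  rw [frobInner_eq_trace, key, Matrix.trace_add]
  exact add_nonneg h1 h2

/-- The one-layer energy estimate carrying the whole argument. -/
lemma frobSq_split_le {n P : ℕ} {A : Matrix (Fin n) (Fin n) ℝ}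
    (hA_symm : A.IsSymm) (hA : A.PosSemidef) (hIA : (1 - A).PosSemidef)
    (D R : Matrix (Fin n) (Fin P) ℝ) :
    frobSq (A * D + R) + frobSq ((1 - A) * D - R) ≤ (frob D + √2 * frob R) ^ 2 := by
  have hpos := frobInner_mul_one_sub_nonneg hA_symm hA hIA D
  set p := A * D with hp
  set q := (1 - A) * D with hq
  have hD : p + q = D := by rw [hp, hq, Matrix.sub_mul, Matrix.one_mul]; abel
  have hsum : frobSq D = frobSq p + 2 * frobInner p q + frobSq q := by
    rw [← frobSq_add, hD]
  have hdiff : frob (p - q) ≤ frob D := by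
    refine Real.sqrt_le_sqrt ?_
    rw [frobSq_sub]
    linarith
  have hcs : frobInner p R - frobInner q R ≤ frob D * frob R := by
    rw [← frobInner_sub_left]
    exact (frobInner_le _ _).trans (mul_le_mul_of_nonneg_right hdiff (frob_nonneg R))
  have h2 : √2 ^ 2 = (2 : ℝ) := Real.sq_sqrt (by norm_num)
  have h1 : (1 : ℝ) ≤ √2 := Real.one_le_sqrt.mpr (by norm_num)
  have hmul : frob D * frob R ≤ √2 * (frob D * frob R) :=
    le_mul_of_one_le_left (mul_nonneg (frob_nonneg D) (frob_nonneg R)) h1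
  have hexp : (frob D + √2 * frob R) ^ 2 =
      frobSq D + 2 * (√2 * (frob D * frob R)) + 2 * frobSq R := by
    rw [← frob_sq D, ← frob_sq R]
    linear_combination frob R ^ 2 * h2
  rw [frobSq_add, frobSq_sub, hexp]
  linarith

lemma frobSq_abs_sub_abs_le {n P : ℕ} (X Y : Matrix (Fin n) (Fin P) ℝ) :
    frobSq (X.map (|·|) - Y.map (|·|)) ≤ frobSq (X - Y) := by
  refine Finset.sum_le_sum fun i _ => Finset.sum_le_sum fun j _ => ?_
  exact sq_le_sq.mpr (abs_abs_sub_abs_le_abs_sub (X i j) (Y i j))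

lemma frobSq_mul_orthogonal {n P : ℕ} (X : Matrix (Fin n) (Fin P) ℝ)
    {V : Matrix (Fin P) (Fin P) ℝ} (hV : Vᵀ * V = 1) : frobSq (X * V) = frobSq X := by
  rw [frobSq_eq_trace, frobSq_eq_trace, Matrix.transpose_mul, Matrix.mul_assoc,
    Matrix.trace_mul_comm, Matrix.mul_assoc, Matrix.mul_assoc, mul_eq_one_comm.mp hV,
    Matrix.mul_one]

lemma frobSq_igt_sub_eigt_succ_le {Ω : Type*} [MeasurableSpace Ω] (μ : Measure Ω) {n P : ℕ}
    (A : Matrix (Fin n) (Fin n) ℝ) (W : ℕ → Matrix (Fin P) (Fin P) ℝ)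
    (X : Ω → Matrix (Fin n) (Fin P) ℝ) (ω : Ω) (m : ℕ) (hW : (W m)ᵀ * W m = 1) :
    frobSq (igtSeq A W (X ω) (m + 1) - eigtSeq μ W X (m + 1) ω) ≤
      frobSq ((1 - A) * (igtSeq A W (X ω) m - eigtSeq μ W X m ω) -
        (A * eigtSeq μ W X m ω - matExp μ (eigtSeq μ W X m))) := by
  rw [igtSeq, eigtSeq]
  refine (frobSq_abs_sub_abs_le _ _).trans (le_of_eq ?_)
  rw [← Matrix.sub_mul, frobSq_mul_orthogonal _ hW]
  congr 1
  simp only [Matrix.mul_sub, Matrix.sub_mul, Matrix.one_mul]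
  abel

/-- On a probability space, with `A` symmetric satisfying `0 ⪯ A ⪯ I`,
`W_0, …, W_{N-1}` orthogonal and `X` an integrable random matrix with all `Ū_m` integrable,
one has almost surely
`(Σ_{m=0}^N ‖A U_m − E[Ū_m]‖²)^{1/2} ≤ √2 · Σ_{m=0}^N ‖A Ū_m − E[Ū_m]‖`. -/
theorem igt_concentrates_around_eigt {Ω : Type*} [MeasurableSpace Ω] (μ : Measure Ω)
    [IsProbabilityMeasure μ] {n P : ℕ} (A : Matrix (Fin n) (Fin n) ℝ)
    (hA_symm : A.IsSymm) (hA_psd : A.PosSemidef) (hIA_psd : (1 - A).PosSemidef)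
    (N : ℕ) (W : ℕ → Matrix (Fin P) (Fin P) ℝ) (hW : ∀ m < N, (W m)ᵀ * W m = 1)
    (X : Ω → Matrix (Fin n) (Fin P) ℝ)
    (hX : ∀ i j, Integrable (fun ω => X ω i j) μ)
    (hU : ∀ m, ∀ i j, Integrable (fun ω => eigtSeq μ W X m ω i j) μ) :
    ∀ᵐ ω ∂μ,
      Real.sqrt (∑ m ∈ Finset.range (N + 1),
          frobSq (A * igtSeq A W (X ω) m - matExp μ (eigtSeq μ W X m))) ≤
        Real.sqrt 2 * ∑ m ∈ Finset.range (N + 1),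
          frob (A * eigtSeq μ W X m ω - matExp μ (eigtSeq μ W X m)) := by
  refine Filter.Eventually.of_forall fun ω => ?_
  set E : ℕ → Matrix (Fin n) (Fin P) ℝ := fun m => matExp μ (eigtSeq μ W X m)
  set D : ℕ → Matrix (Fin n) (Fin P) ℝ := fun m =>
    igtSeq A W (X ω) m - eigtSeq μ W X m ω with hDdef
  set R : ℕ → Matrix (Fin n) (Fin P) ℝ := fun m => A * eigtSeq μ W X m ω - E m with hRdef
  have hs : ∀ m, A * igtSeq A W (X ω) m - E m = A * D m + R m := by
    intro m
    simp only [hDdef, hRdef, Matrix.mul_sub]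
    abel
  -- One layer of the induction: the cross term is controlled through `‖D_k‖ ≤ √2 ∑_{m<k} ‖R_m‖`.
  have hstep : ∀ (k : ℕ) (S T : ℝ), 0 ≤ S → 0 ≤ T → S + frobSq (D k) ≤ 2 * T ^ 2 →
      S + frobSq (A * D k + R k) + frobSq ((1 - A) * D k - R k) ≤
        2 * (T + frob (R k)) ^ 2 := by
    intro k S T hS hT h
    have hsplit := frobSq_split_le hA_symm hA_psd hIA_psd (D k) (R k)
    have h2 : √2 ^ 2 = (2 : ℝ) := Real.sq_sqrt (by norm_num)
    have hd : frob (D k) ≤ √2 * T := by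
      refine abs_le_of_sq_le_sq' ?_ (by positivity) |>.2
      rw [frob_sq, mul_pow, h2]
      linarith
    have hcross := mul_le_mul_of_nonneg_right hd
      (mul_nonneg (Real.sqrt_nonneg 2) (frob_nonneg (R k)))
    rw [← frob_sq (D k)] at h
    have e1 : √2 * T * (√2 * frob (R k)) = 2 * (T * frob (R k)) := by
      linear_combination (T * frob (R k)) * h2
    have e2 : (frob (D k) + √2 * frob (R k)) ^ 2 =
        frob (D k) ^ 2 + 2 * (frob (D k) * (√2 * frob (R k))) + 2 * frob (R k) ^ 2 := by
      linear_combination frob (R k) ^ 2 * h2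
    have e3 : 2 * (T + frob (R k)) ^ 2 =
        2 * T ^ 2 + 4 * (T * frob (R k)) + 2 * frob (R k) ^ 2 := by ring
    linarith
  have hS0 : ∀ k, 0 ≤ ∑ m ∈ Finset.range k, frobSq (A * D m + R m) := fun k =>
    Finset.sum_nonneg fun _ _ => frobSq_nonneg _
  have hT0 : ∀ k, 0 ≤ ∑ m ∈ Finset.range k, frob (R m) := fun k =>
    Finset.sum_nonneg fun _ _ => frob_nonneg _
  have hind : ∀ k ≤ N, ∑ m ∈ Finset.range k, frobSq (A * D m + R m) + frobSq (D k) ≤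
      2 * (∑ m ∈ Finset.range k, frob (R m)) ^ 2 := by
    intro k
    induction k with
    | zero =>
      intro _
      simp [hDdef, igtSeq, eigtSeq, frobSq]
    | succ k ih =>
      intro hk
      have h := hstep k _ _ (hS0 k) (hT0 k) (ih (by omega))
      have hD := frobSq_igt_sub_eigt_succ_le μ A W X ω k (hW k (by omega))
      rw [Finset.sum_range_succ, Finset.sum_range_succ]
      exact (add_le_add_right hD _).trans h
  have hfin := hstep N _ _ (hS0 N) (hT0 N) (hind N le_rfl)
  rw [← Finset.sum_range_succ, ← Finset.sum_range_succ] at hfin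
  have hq := frobSq_nonneg ((1 - A) * D N - R N)
  change √(∑ m ∈ Finset.range (N + 1), frobSq (A * igtSeq A W (X ω) m - E m)) ≤
    √2 * ∑ m ∈ Finset.range (N + 1), frob (R m)
  simp only [hs]
  refine Real.sqrt_le_iff.mpr ⟨mul_nonneg (Real.sqrt_nonneg 2) (hT0 _), ?_⟩
  rw [mul_pow, Real.sq_sqrt (by norm_num)]
  linarith
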